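/- Both first-level projections of the level-one stabilizer of the Basilica group are all of B: for every g ∈ B there exists h₀ ∈ B with h₀ (false :: w) = false :: g w for all w : List Bool, and there exists h₁ ∈ B with h₁ (true :: w) = true :: g w for all w : List Bool. -/

import Mathlib

/-!
Each projection is a homomorphism on the stabilizer of the corresponding vertex, so it is enough to
lift the generators `a` and `b`. Writing `(x, y)` for the element acting as `x` below `false` and as
`y` below `true`, the recursion gives `b² = (a, a)`, `a = (1, b)` and `b⁻¹ a b = (b, _)`. Hence `b²`
lifts `a` on both sides, while `b` is lifted by `b⁻¹ a b` below `false` and by `a` below `true`.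
-/

namespace Basilica

mutual
  /-- Underlying map of the Basilica generator `a`. -/
  def aF : List Bool → List Bool
    | [] => []
    | false :: w => false :: w
    | true :: w => true :: bF w
  /-- Underlying map of the Basilica generator `b`. -/
  def bF : List Bool → List Bool
    | [] => []
    | false :: w => true :: w
    | true :: w => false :: aF w
end

mutual
  /-- Inverse of `aF`. -/
  def aI : List Bool → List Bool
    | [] => []
    | false :: w => false :: w
    | true :: w => true :: bI w
  /-- Inverse of `bF`. -/
  def bI : List Bool → List Bool
    | [] => []
    | false :: w => true :: aI w
    | true :: w => false :: w
end

theorem basilica_inv : ∀ w : List Bool,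
    aI (aF w) = w ∧ bI (bF w) = w ∧ aF (aI w) = w ∧ bF (bI w) = w := by
  intro w
  induction w with
  | nil => simp [aF, bF, aI, bI]
  | cons x w ih =>
    cases x <;>
      simp [aF, bF, aI, bI, ih.1, ih.2.1, ih.2.2.1, ih.2.2.2]

/-- The Basilica generator `a` as a permutation of the binary tree `List Bool`:
`a [] = []`, `a (false :: w) = false :: w`, `a (true :: w) = true :: b w`. -/
def a : Equiv.Perm (List Bool) :=
  ⟨aF, aI, fun w => (basilica_inv w).1, fun w => (basilica_inv w).2.2.1⟩

/-- The Basilica generator `b` as a permutation of the binary tree `List Bool`: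
`b [] = []`, `b (false :: w) = true :: w`, `b (true :: w) = false :: a w`. -/
def b : Equiv.Perm (List Bool) :=
  ⟨bF, bI, fun w => (basilica_inv w).2.1, fun w => (basilica_inv w).2.2.2⟩

/-- Underlying map of the pair `(g, h)` acting on the two subtrees. -/
def pairF (g h : List Bool → List Bool) : List Bool → List Bool
  | [] => []
  | false :: w => false :: g w
  | true :: w => true :: h w

/-- The permutation of `List Bool` acting as `g` on the subtree below `false`
and as `h` on the subtree below `true`, fixing the root. -/
def pair (g h : Equiv.Perm (List Bool)) : Equiv.Perm (List Bool) :=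
  ⟨pairF g h, pairF g.symm h.symm,
    fun w => by cases w with
      | nil => rfl
      | cons x w => cases x <;> simp [pairF],
    fun w => by cases w with
      | nil => rfl
      | cons x w => cases x <;> simp [pairF]⟩

/-- The Basilica group: the subgroup of `Equiv.Perm (List Bool)` generated by `a` and `b`. -/
def B : Subgroup (Equiv.Perm (List Bool)) := Subgroup.closure {a, b}

end Basilica

namespace Basilica

/-- If both generators lift to elements of `B` fixing the vertex `x`, then so does every element of
`B`, since liftable permutations are closed under products and inverses. -/
theorem exists_lift_of_generators (x : Bool)
    (ha : ∃ h ∈ B, ∀ w : List Bool, h (x :: w) = x :: a w)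
    (hb : ∃ h ∈ B, ∀ w : List Bool, h (x :: w) = x :: b w)
    {g : Equiv.Perm (List Bool)} (hg : g ∈ B) :
    ∃ h ∈ B, ∀ w : List Bool, h (x :: w) = x :: g w := by
  induction hg using Subgroup.closure_induction with
  | mem y hy =>
    rcases hy with rfl | rfl
    · exact ha
    · exact hb
  | one => exact ⟨1, B.one_mem, fun _ => rfl⟩
  | mul y z _ _ ihy ihz =>
    obtain ⟨h, hh, hw⟩ := ihy
    obtain ⟨k, kh, kw⟩ := ihz
    exact ⟨h * k, B.mul_mem hh kh, fun w => by simp [hw, kw]⟩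
  | inv y _ ihy =>
    obtain ⟨h, hh, hw⟩ := ihy
    exact ⟨h⁻¹, B.inv_mem hh, fun w => by rw [Equiv.Perm.inv_eq_iff_eq, hw]; simp⟩

theorem a_mem_B : a ∈ B := Subgroup.subset_closure (by simp)

theorem b_mem_B : b ∈ B := Subgroup.subset_closure (by simp)

theorem a_true (w : List Bool) : a (true :: w) = true :: b w := by
  change aF (true :: w) = true :: bF w
  rw [aF]

theorem b_false (w : List Bool) : b (false :: w) = true :: w := by
  change bF (false :: w) = true :: w
  rw [bF]

theorem b_true (w : List Bool) : b (true :: w) = false :: a w := by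
  change bF (true :: w) = false :: aF w
  rw [bF]

end Basilica

open Basilica in
/-- Both first-level projections of the level-one stabilizer of the Basilica group
are all of `B`. -/
theorem basilica_level_one_projections (g : Equiv.Perm (List Bool)) (hg : g ∈ B) :
    (∃ h₀ ∈ B, ∀ w : List Bool, h₀ (false :: w) = false :: g w) ∧
      (∃ h₁ ∈ B, ∀ w : List Bool, h₁ (true :: w) = true :: g w) := by
  constructor
  · refine exists_lift_of_generators false
      ⟨b * b, B.mul_mem b_mem_B b_mem_B, fun w => ?_⟩
      ⟨b⁻¹ * a * b, B.mul_mem (B.mul_mem (B.inv_mem b_mem_B) a_mem_B) b_mem_B, fun w => ?_⟩ hg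
    · simp [b_false, b_true]
    · rw [Equiv.Perm.mul_apply, Equiv.Perm.mul_apply, Equiv.Perm.inv_eq_iff_eq, b_false, a_true,
        b_false]
  · refine exists_lift_of_generators true
      ⟨b * b, B.mul_mem b_mem_B b_mem_B, fun w => ?_⟩
      ⟨a, a_mem_B, a_true⟩ hg
    simp [b_false, b_true]
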